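/- arXiv:2308.14351 — 8 statements merged into one kernel-verified Lean document; each statement's English description precedes it below -/
import Mathlib

section
/- Let R be a nontrivial commutative ring and let G be a subgroup of UT₃(R) containing a₁ and a₂. Then C_G(a₁) ∩ C_G(a₂) = Z(G), i.e. the intersection of the centralizers in G of a₁ and of a₂ equals the center of G. -/
set_option linter.unnecessarySeqFocus false

open Matrix

/-- A 3×3 matrix is *upper unitriangular* if all diagonal entries are `1`
and all entries below the diagonal are `0`. -/
def IsUnitriangular {R : Type*} [CommRing R] (M : Matrix (Fin 3) (Fin 3) R) : Prop :=
  (∀ i, M i i = 1) ∧ ∀ i j : Fin 3, j < i → M i j = 0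

/-- The upper unitriangular matrix with above-diagonal entries `a b c`, as a unit. -/
def ut {R : Type*} [CommRing R] (a b c : R) : (Matrix (Fin 3) (Fin 3) R)ˣ where
  val := !![1, a, b; 0, 1, c; 0, 0, 1]
  inv := !![1, -a, a * c - b; 0, 1, -c; 0, 0, 1]
  val_inv := by
    ext i j
    fin_cases i <;> fin_cases j <;>
      simp [Matrix.mul_apply, Fin.sum_univ_three, Matrix.one_apply, Matrix.vecHead, Matrix.vecTail] <;> ring
  inv_val := by
    ext i j
    fin_cases i <;> fin_cases j <;>
      simp [Matrix.mul_apply, Fin.sum_univ_three, Matrix.one_apply, Matrix.vecHead, Matrix.vecTail] <;> ring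

lemma ut_eq_iff {R : Type*} [CommRing R] (g : (Matrix (Fin 3) (Fin 3) R)ˣ) :
    IsUnitriangular (g : Matrix (Fin 3) (Fin 3) R) ↔
      ∃ a b c : R, g = ut a b c := by
  constructor
  · rintro ⟨h1, h2⟩
    refine ⟨(g : Matrix (Fin 3) (Fin 3) R) 0 1, (g : Matrix (Fin 3) (Fin 3) R) 0 2,
      (g : Matrix (Fin 3) (Fin 3) R) 1 2, Units.ext ?_⟩
    ext i j
    fin_cases i <;> fin_cases j <;>
      simp [ut, Matrix.vecHead, Matrix.vecTail, h1, h2 1 0 (by decide), h2 2 0 (by decide), h2 2 1 (by decide)]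
  · rintro ⟨a, b, c, rfl⟩
    constructor
    · intro i; fin_cases i <;> simp [ut]
    · intro i j hij
      fin_cases i <;> fin_cases j <;> simp_all [ut, Matrix.vecHead, Matrix.vecTail]

/-- `UT₃(R)`: the group of 3×3 upper unitriangular matrices over `R`, realized as the
subgroup of units of the matrix ring whose underlying matrices are upper unitriangular. -/
def UT3 (R : Type*) [CommRing R] : Subgroup (Matrix (Fin 3) (Fin 3) R)ˣ where
  carrier := {g | IsUnitriangular (g : Matrix (Fin 3) (Fin 3) R)}
  one_mem' := by
    constructor
    · intro i; simp
    · intro i j hij; simp [Matrix.one_apply, hij.ne']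
  mul_mem' := by
    intro a b ha hb
    rw [Set.mem_setOf_eq, ut_eq_iff] at *
    obtain ⟨a1, a2, a3, rfl⟩ := ha
    obtain ⟨b1, b2, b3, rfl⟩ := hb
    refine ⟨a1 + b1, a2 + b2 + a1 * b3, a3 + b3, Units.ext ?_⟩
    ext i j
    fin_cases i <;> fin_cases j <;>
      simp [ut, Matrix.mul_apply, Fin.sum_univ_three, Matrix.vecHead, Matrix.vecTail] <;> ring
  inv_mem' := by
    intro a ha
    rw [Set.mem_setOf_eq, ut_eq_iff] at *
    obtain ⟨a1, a2, a3, rfl⟩ := ha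
    refine ⟨-a1, a1 * a3 - a2, -a3, Units.ext ?_⟩
    rfl

/-- The generator `a₁` of the Heisenberg group: `(2,3)`-entry `1`, other
above-diagonal entries `0`. -/
def genA1 (R : Type*) [CommRing R] : (Matrix (Fin 3) (Fin 3) R)ˣ := ut 0 0 1

/-- The generator `a₂` of the Heisenberg group: `(1,2)`-entry `1`, other
above-diagonal entries `0`. -/
def genA2 (R : Type*) [CommRing R] : (Matrix (Fin 3) (Fin 3) R)ˣ := ut 1 0 0

lemma genA1_mem (R : Type*) [CommRing R] : genA1 R ∈ UT3 R :=
  (ut_eq_iff _).mpr ⟨0, 0, 1, rfl⟩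

lemma genA2_mem (R : Type*) [CommRing R] : genA2 R ∈ UT3 R :=
  (ut_eq_iff _).mpr ⟨1, 0, 0, rfl⟩

lemma ut_mul_comm_iff {R : Type*} [CommRing R] (a b c a' b' c' : R) :
    ut a b c * ut a' b' c' = ut a' b' c' * ut a b c ↔ a * c' = a' * c := by
  have key : ∀ a b c a' b' c' : R,
      ut a b c * ut a' b' c' = ut (a + a') (b + b' + a * c') (c + c') := by
    intro a b c a' b' c'
    apply Units.ext
    ext i j
    fin_cases i <;> fin_cases j <;>
      simp [ut, Matrix.mul_apply, Fin.sum_univ_three, Matrix.vecHead, Matrix.vecTail] <;> ring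
  rw [key, key]
  constructor
  · intro h
    have h' := congrArg (fun g : (Matrix (Fin 3) (Fin 3) R)ˣ =>
      (g : Matrix (Fin 3) (Fin 3) R) 0 2) h
    simp [ut] at h'
    linear_combination h'
  · intro h
    rw [h, add_comm a a', add_comm b b', add_comm c c']

/-- For a subgroup `G ≤ UT₃(R)` containing `a₁` and `a₂` (`R` a nontrivial
commutative ring), `C_G(a₁) ∩ C_G(a₂) = Z(G)`. -/
theorem centralizers_inf_eq_center (R : Type*) [CommRing R] [Nontrivial R]
    (G : Subgroup (Matrix (Fin 3) (Fin 3) R)ˣ) (hG : G ≤ UT3 R)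
    (h1 : genA1 R ∈ G) (h2 : genA2 R ∈ G) :
    Subgroup.centralizer ({⟨genA1 R, h1⟩} : Set G) ⊓
        Subgroup.centralizer ({⟨genA2 R, h2⟩} : Set G) =
      Subgroup.center G := by
  ext ⟨x, hx⟩
  rw [Subgroup.mem_inf, Subgroup.mem_centralizer_iff, Subgroup.mem_centralizer_iff,
    Subgroup.mem_center_iff]
  constructor
  · rintro ⟨k1, k2⟩ ⟨y, hy⟩
    have e1 := congrArg Subtype.val (k1 _ rfl)
    have e2 := congrArg Subtype.val (k2 _ rfl)
    apply Subtype.ext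
    obtain ⟨a, b, c, rfl⟩ := (ut_eq_iff x).mp (hG hx)
    obtain ⟨a', b', c', rfl⟩ := (ut_eq_iff y).mp (hG hy)
    have f1 := (ut_mul_comm_iff _ _ _ _ _ _).mp e1
    have f2 := (ut_mul_comm_iff _ _ _ _ _ _).mp e2
    refine (ut_mul_comm_iff _ _ _ _ _ _).mpr ?_
    linear_combination a' * f2 + c' * f1
  · intro h
    exact ⟨fun g _ => h g, fun g _ => h g⟩
end

section
/- Let R be a nontrivial commutative ring. The group UT₃(R) satisfies the sentence τ (for all x₁, x₂ ∈ UT₃(R) with [x₂,x₁]=1, [a₂,x₂]=1 and [x₁,a₁]=1, either [x₂,a₁]=1 or [a₂,x₁]=1) if and only if R is an integral domain. -/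
set_option linter.unnecessarySeqFocus false

open Matrix

/-- The sentence `τ`: for all `x₁ x₂` in `G` with `[x₂,x₁] = 1`, `[a₂,x₂] = 1` and
`[x₁,a₁] = 1`, either `[x₂,a₁] = 1` or `[a₂,x₁] = 1` (commutators `[y,x] = y⁻¹x⁻¹yx`). -/
def SatisfiesTau (R : Type*) [CommRing R] (G : Subgroup (Matrix (Fin 3) (Fin 3) R)ˣ) : Prop :=
  ∀ x₁ ∈ G, ∀ x₂ ∈ G,
    x₂⁻¹ * x₁⁻¹ * x₂ * x₁ = 1 →
    (genA2 R)⁻¹ * x₂⁻¹ * genA2 R * x₂ = 1 →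
    x₁⁻¹ * (genA1 R)⁻¹ * x₁ * genA1 R = 1 →
    (x₂⁻¹ * (genA1 R)⁻¹ * x₂ * genA1 R = 1 ∨ (genA2 R)⁻¹ * x₁⁻¹ * genA2 R * x₁ = 1)

lemma ut_comm_iff {R : Type*} [CommRing R] (a b c a' b' c' : R) :
    (ut a b c)⁻¹ * (ut a' b' c')⁻¹ * ut a b c * ut a' b' c' = 1 ↔ a * c' = a' * c := by
  have h : (ut a b c)⁻¹ * (ut a' b' c')⁻¹ * ut a b c * ut a' b' c' = 1 ↔
      ut a b c * ut a' b' c' = ut a' b' c' * ut a b c := by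
    rw [← _root_.mul_inv_rev, _root_.mul_assoc, inv_mul_eq_one, eq_comm]
  have hm : ∀ x y z x' y' z' : R,
      ut x y z * ut x' y' z' = ut (x + x') (y + y' + x * z') (z + z') := by
    intro x y z x' y' z'
    apply Units.ext
    ext i j
    fin_cases i <;> fin_cases j <;>
      simp [ut, Matrix.mul_apply, Fin.sum_univ_three, Matrix.vecHead, Matrix.vecTail] <;> ring
  rw [h, hm, hm]
  constructor
  · intro e
    have e2 := congrArg (fun g : (Matrix (Fin 3) (Fin 3) R)ˣ => g.val 0 2) e
    simp [ut] at e2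
    linear_combination e2
  · intro e
    rw [e, add_comm a a', add_comm b b', add_comm c c', ← e]

/-- For a nontrivial commutative ring `R`, the group `UT₃(R)` satisfies
the sentence `τ` if and only if `R` is an integral domain. -/
theorem UT3_satisfiesTau_iff_isDomain (R : Type*) [CommRing R] [Nontrivial R] :
    SatisfiesTau R (UT3 R) ↔ IsDomain R := by
  constructor
  · intro H
    have : NoZeroDivisors R := by
      refine ⟨fun {p u} hpu => ?_⟩
      have := H (ut 0 0 u) ((ut_eq_iff _).mpr ⟨_, _, _, rfl⟩)
        (ut p 0 0) ((ut_eq_iff _).mpr ⟨_, _, _, rfl⟩)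
      simp only [genA1, genA2, ut_comm_iff] at this
      simpa using this (by simpa using hpu) (by simp) (by simp)
    exact NoZeroDivisors.to_isDomain R
  · intro _ x₁ h₁ x₂ h₂
    obtain ⟨s, t, u, rfl⟩ := (ut_eq_iff x₁).mp h₁
    obtain ⟨p, q, r, rfl⟩ := (ut_eq_iff x₂).mp h₂
    simp only [genA1, genA2, ut_comm_iff]
    intro e1 e2 e3
    have hr : r = 0 := by simpa using e2
    have hs : s = 0 := by simpa using e3
    subst hr hs
    have : p = 0 ∨ u = 0 := by simpa using e1
    simpa using this
end

section
/- Let R be a commutative ring such that for every nonzero r ∈ R there is a ring homomorphism φ: R → ℤ with φ(r) ≠ 0 (R is residually-ℤ). Then the following are equivalent: (i) R is an integral domain; (ii) R is ω-residually-ℤ, i.e. for every finite list r₁, …, r_n of nonzero elements of R there is a single ring homomorphism φ: R → ℤ with φ(rᵢ) ≠ 0 for all i. -/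
/-- A residually-ℤ commutative ring is an integral domain if and only if
it is ω-residually-ℤ: every finite list of nonzero elements can be simultaneously
not annihilated by a single ring homomorphism to ℤ. -/
theorem isDomain_iff_omega_residually_int (R : Type*) [CommRing R] [Nontrivial R]
    (hres : ∀ r : R, r ≠ 0 → ∃ φ : R →+* ℤ, φ r ≠ 0) :
    IsDomain R ↔
      ∀ l : List R, (∀ r ∈ l, r ≠ 0) → ∃ φ : R →+* ℤ, ∀ r ∈ l, φ r ≠ 0 := by
  constructor
  · intro hD l hl
    have hp : l.prod ≠ 0 := by
      intro h
      exact hl 0 (List.prod_eq_zero_iff.mp h) rfl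
    obtain ⟨φ, hφ⟩ := hres _ hp
    refine ⟨φ, fun r hr h0 => hφ ?_⟩
    rw [map_list_prod]
    exact List.prod_eq_zero (List.mem_map.mpr ⟨r, hr, h0⟩)
  · intro h
    have : NoZeroDivisors R := ⟨by
      intro a b hab
      by_contra hc
      rw [not_or] at hc
      obtain ⟨φ, hφ⟩ := h [a, b] (by
        intro r hr
        simp only [List.mem_cons, List.not_mem_nil, or_false] at hr
        rcases hr with rfl | rfl
        · exact hc.1
        · exact hc.2)
      have h1 := hφ a (by simp)
      have h2 := hφ b (by simp)
      apply mul_ne_zero h1 h2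
      rw [← map_mul, hab, map_zero]⟩
    exact NoZeroDivisors.to_isDomain R
end

section
/- Let G be a group of nilpotency class at most 2 (i.e. the commutator subgroup [G,G] is contained in the center Z(G)), let G₀ be a subgroup of G and let Y ∈ G. Then every element of the subgroup generated by G₀ ∪ {Y} can be written in the form u · Yⁿ · [Y,w] for some u, w ∈ G₀ and n ∈ ℤ. -/
/-- In a group `G` of nilpotency class at most 2 (i.e. all commutators
are central), every element of the subgroup generated by a subgroup `G₀` together with an
element `Y` has the form `u · Yⁿ · [Y,w]` with `u, w ∈ G₀` and `n : ℤ`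
(commutators `[y,x] = y⁻¹x⁻¹yx`). -/
theorem mem_closure_insert_eq_form {G : Type*} [Group G]
    (hnil : ∀ x y : G, y⁻¹ * x⁻¹ * y * x ∈ Subgroup.center G)
    (G₀ : Subgroup G) (Y : G) :
    ∀ g ∈ Subgroup.closure (↑G₀ ∪ {Y}),
      ∃ u ∈ G₀, ∃ w ∈ G₀, ∃ n : ℤ, g = u * Y ^ n * (Y⁻¹ * w⁻¹ * Y * w) := by
  have hc : ∀ w h : G, h * (Y⁻¹ * w⁻¹ * Y * w) = (Y⁻¹ * w⁻¹ * Y * w) * h := fun w h =>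
    Subgroup.mem_center_iff.mp (hnil w Y) h
  let c : G →* G := MonoidHom.mk' (fun w => Y⁻¹ * w⁻¹ * Y * w) (by
    intro a b
    calc Y⁻¹ * (a * b)⁻¹ * Y * (a * b)
        = Y⁻¹ * b⁻¹ * Y * ((Y⁻¹ * a⁻¹ * Y * a) * b) := by group
      _ = Y⁻¹ * b⁻¹ * Y * (b * (Y⁻¹ * a⁻¹ * Y * a)) := by rw [hc a b]
      _ = (Y⁻¹ * b⁻¹ * Y * b) * (Y⁻¹ * a⁻¹ * Y * a) := by group
      _ = (Y⁻¹ * a⁻¹ * Y * a) * (Y⁻¹ * b⁻¹ * Y * b) := hc a _)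
  have hcd : ∀ w, c w = Y⁻¹ * w⁻¹ * Y * w := fun w => rfl
  have hcc : ∀ w h : G, h * c w = c w * h := hc
  have key : ∀ (v : G) (n : ℤ), Y ^ n * v = v * Y ^ n * c (v ^ n) := by
    intro v n
    have h1 : v⁻¹ * Y * v⁻¹⁻¹ = Y * c v := by rw [hcd]; group
    have h2 : (v⁻¹ * Y * v⁻¹⁻¹) ^ n = v⁻¹ * Y ^ n * v⁻¹⁻¹ := conj_zpow
    rw [h1, Commute.mul_zpow (hcc v Y), ← map_zpow] at h2
    rw [mul_assoc, h2]; simp [mul_assoc]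
  have step : ∀ g x : G, x ∈ G₀ →
      (∃ u ∈ G₀, ∃ w ∈ G₀, ∃ n : ℤ, g = u * Y ^ n * c w) →
      ∃ u ∈ G₀, ∃ w ∈ G₀, ∃ n : ℤ, g * x = u * Y ^ n * c w := by
    rintro g x hx ⟨u, hu, w, hw, n, rfl⟩
    refine ⟨u * x, mul_mem hu hx, x ^ n * w, mul_mem (zpow_mem hx n) hw, n, ?_⟩
    calc u * Y ^ n * c w * x = u * (Y ^ n * x) * c w := by
          rw [mul_assoc (u * Y ^ n), ← hcc w x]; simp only [mul_assoc]
      _ = _ := by rw [key, map_mul]; simp only [mul_assoc]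
  have stepY : ∀ (g : G) (m : ℤ),
      (∃ u ∈ G₀, ∃ w ∈ G₀, ∃ n : ℤ, g = u * Y ^ n * c w) →
      ∃ u ∈ G₀, ∃ w ∈ G₀, ∃ n : ℤ, g * Y ^ m = u * Y ^ n * c w := by
    rintro g m ⟨u, hu, w, hw, n, rfl⟩
    refine ⟨u, hu, w, hw, n + m, ?_⟩
    rw [mul_assoc (u * Y ^ n), ← hcc w, zpow_add]; simp only [mul_assoc]
  intro g hg
  change ∃ u ∈ G₀, ∃ w ∈ G₀, ∃ n : ℤ, g = u * Y ^ n * c w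
  induction hg using Subgroup.closure_induction_right with
  | one => exact ⟨1, one_mem _, 1, one_mem _, 0, by simp⟩
  | mul_right x hx y hy ih =>
    rcases hy with hy | hy
    · exact step _ _ hy ih
    · rw [Set.mem_singleton_iff.mp hy]
      simpa only [zpow_one] using stepY _ 1 ih
  | mul_inv_cancel x hx y hy ih =>
    rcases hy with hy | hy
    · exact step _ _ (inv_mem hy) ih
    · rw [Set.mem_singleton_iff.mp hy]
      simpa only [zpow_neg_one] using stepY _ (-1) ih
end

section
/- Let R be a nontrivial commutative ring that is locally residually-ℤ and let G be a subgroup of UT₃(R) containing a₁ and a₂. Suppose C_G(a₁) ⊆ ⟨a₁⟩·Z(G) and C_G(a₂) ⊆ ⟨a₂⟩·Z(G) (i.e. every element of the centralizer of aᵢ in G is a power of aᵢ times a central element of G, for i = 1, 2). Then the representation G ≤ UT₃(R) satisfies the Lame Property. -/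
set_option linter.unnecessarySeqFocus false

open Matrix

/-- A commutative ring `R` is *locally residually-ℤ* if for every finitely generated
subring `R₀` of `R` and every nonzero `r ∈ R₀` there is a ring homomorphism
`φ : R₀ →+* ℤ` with `φ r ≠ 0`. -/
def LocResZ (R : Type*) [CommRing R] : Prop :=
  ∀ R₀ : Subring R, (∃ s : Finset R, R₀ = Subring.closure ↑s) →
    ∀ r : R₀, r ≠ 0 → ∃ φ : R₀ →+* ℤ, φ r ≠ 0

/-- The representation `G ≤ UT₃(R)` satisfies the *Lame Property* if for every
`g ∈ C_G(a₁) ∪ C_G(a₂)`, either `g₁₂² + g₂₃² = 0` or `g₁₂² + g₂₃²` is not a zero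
divisor in `R`. -/
def LameProperty (R : Type*) [CommRing R] (G : Subgroup (Matrix (Fin 3) (Fin 3) R)ˣ) : Prop :=
  ∀ g ∈ G, (g * genA1 R = genA1 R * g ∨ g * genA2 R = genA2 R * g) →
    ((g : Matrix (Fin 3) (Fin 3) R) 0 1 ^ 2 + (g : Matrix (Fin 3) (Fin 3) R) 1 2 ^ 2 = 0 ∨
      (g : Matrix (Fin 3) (Fin 3) R) 0 1 ^ 2 + (g : Matrix (Fin 3) (Fin 3) R) 1 2 ^ 2 ∈
        nonZeroDivisors R)

lemma ut_mul {R : Type*} [CommRing R] (a b c a' b' c' : R) :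
    ut a b c * ut a' b' c' = ut (a + a') (b + b' + a * c') (c + c') := by
  refine Units.ext ?_
  ext i j
  fin_cases i <;> fin_cases j <;>
    simp [ut, Matrix.mul_apply, Fin.sum_univ_three, Matrix.vecHead, Matrix.vecTail] <;> ring

lemma ut_inv {R : Type*} [CommRing R] (a b c : R) :
    (ut a b c)⁻¹ = ut (-a) (a * c - b) (-c) := Units.ext rfl

lemma ut_02 {R : Type*} [CommRing R] (a b c : R) :
    (ut a b c : Matrix (Fin 3) (Fin 3) R) 0 2 = b := by simp [ut]

lemma ut_01 {R : Type*} [CommRing R] (a b c : R) :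
    (ut a b c : Matrix (Fin 3) (Fin 3) R) 0 1 = a := by simp [ut]

lemma ut_12 {R : Type*} [CommRing R] (a b c : R) :
    (ut a b c : Matrix (Fin 3) (Fin 3) R) 1 2 = c := by simp [ut]

lemma ut_zero {R : Type*} [CommRing R] : ut (0 : R) 0 0 = 1 := by
  have h := mul_inv_cancel (ut (0 : R) 0 0)
  rw [ut_inv, ut_mul] at h
  simpa using h

lemma genA1_zpow {R : Type*} [CommRing R] (n : ℤ) : genA1 R ^ n = ut 0 0 (n : R) := by
  induction n using Int.induction_on with
  | zero => simp [ut_zero]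
  | succ k ih => rw [_root_.zpow_add_one, ih, genA1, ut_mul]; simp
  | pred k ih => rw [_root_.zpow_sub_one, ih, genA1, ut_inv, ut_mul]; simp [sub_eq_add_neg]

lemma genA2_zpow {R : Type*} [CommRing R] (n : ℤ) : genA2 R ^ n = ut (n : R) 0 0 := by
  induction n using Int.induction_on with
  | zero => simp [ut_zero]
  | succ k ih => rw [_root_.zpow_add_one, ih, genA2, ut_mul]; simp
  | pred k ih => rw [_root_.zpow_sub_one, ih, genA2, ut_inv, ut_mul]; simp [sub_eq_add_neg]

lemma central_form {R : Type*} [CommRing R] (z : (Matrix (Fin 3) (Fin 3) R)ˣ) (hz : z ∈ UT3 R)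
    (h1 : z * genA1 R = genA1 R * z) (h2 : z * genA2 R = genA2 R * z) :
    ∃ b : R, z = ut 0 b 0 := by
  obtain ⟨a, b, c, rfl⟩ := (ut_eq_iff z).mp hz
  have e1 := congrArg (fun u : (Matrix (Fin 3) (Fin 3) R)ˣ => (u : Matrix (Fin 3) (Fin 3) R) 0 2) h1
  have e2 := congrArg (fun u : (Matrix (Fin 3) (Fin 3) R)ˣ => (u : Matrix (Fin 3) (Fin 3) R) 0 2) h2
  simp only [genA1, genA2, ut_mul, ut_02] at e1 e2
  have ha : a = 0 := by linear_combination e1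
  have hc : c = 0 := by linear_combination -e2
  exact ⟨b, by rw [ha, hc]⟩

lemma int_sq_lame {R : Type*} [CommRing R] (hR : LocResZ R) (n : ℤ) :
    (n : R) ^ 2 = 0 ∨ (n : R) ^ 2 ∈ nonZeroDivisors R := by
  by_cases hn : n = 0
  · left; simp [hn]
  right
  rw [mem_nonZeroDivisors_iff_right]
  intro x hx
  by_contra hx0
  have hmem : x ∈ Subring.closure (({x} : Finset R) : Set R) :=
    Subring.subset_closure (by simp)
  obtain ⟨φ, hφ⟩ := hR _ ⟨{x}, rfl⟩ ⟨x, hmem⟩ (fun h => hx0 (congrArg Subtype.val h))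
  have h0 : (⟨x, hmem⟩ : Subring.closure (({x} : Finset R) : Set R)) * (n : _) ^ 2 = 0 := by
    apply Subtype.ext
    simpa using hx
  have h3 := congrArg φ h0
  simp [hn] at h3
  exact hφ h3

/-- If `C_G(a₁) ⊆ ⟨a₁⟩·Z(G)` and `C_G(a₂) ⊆ ⟨a₂⟩·Z(G)`, then the
representation `G ≤ UT₃(R)` satisfies the Lame Property. -/
theorem lame_of_cyclic_centralizers (R : Type*) [CommRing R] [Nontrivial R]
    (hR : LocResZ R)
    (G : Subgroup (Matrix (Fin 3) (Fin 3) R)ˣ) (hG : G ≤ UT3 R)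
    (h1 : genA1 R ∈ G) (h2 : genA2 R ∈ G)
    (hC1 : ∀ x ∈ G, x * genA1 R = genA1 R * x →
      ∃ (n : ℤ) (zc : (Matrix (Fin 3) (Fin 3) R)ˣ), zc ∈ G ∧ (∀ g ∈ G, zc * g = g * zc) ∧
        x = genA1 R ^ n * zc)
    (hC2 : ∀ y ∈ G, y * genA2 R = genA2 R * y →
      ∃ (n : ℤ) (zc : (Matrix (Fin 3) (Fin 3) R)ˣ), zc ∈ G ∧ (∀ g ∈ G, zc * g = g * zc) ∧
        y = genA2 R ^ n * zc) :
    LameProperty R G := by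
  intro g hg hc
  rcases hc with hc | hc
  · obtain ⟨n, z, hzG, hz, rfl⟩ := hC1 g hg hc
    obtain ⟨b, rfl⟩ := central_form z (hG hzG) (hz _ h1) (hz _ h2)
    rw [genA1_zpow, ut_mul, ut_01, ut_12]
    simpa using int_sq_lame hR n
  · obtain ⟨n, z, hzG, hz, rfl⟩ := hC2 g hg hc
    obtain ⟨b, rfl⟩ := central_form z (hG hzG) (hz _ h1) (hz _ h2)
    rw [genA2_zpow, ut_mul, ut_01, ut_12]
    have h := int_sq_lame hR n
    simp only [add_zero, ne_eq, OfNat.ofNat_ne_zero, not_false_eq_true, zero_pow]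
    exact h
end

section
/- Let R be a nontrivial commutative ring and let G be a subgroup of UT₃(R) containing a₁ and a₂. Let Ĝ be the subgroup of UT₃(R) generated by G together with all matrices in UT₃(R) whose (1,2)- and (2,3)-entries are 0. Then Ĝ satisfies τ if and only if G satisfies τ, where a subgroup K ≤ UT₃(R) containing a₁, a₂ satisfies τ means: for all x₁, x₂ ∈ K with [x₂,x₁]=1, [a₂,x₂]=1 and [x₁,a₁]=1, either [x₂,a₁]=1 or [a₂,x₁]=1. -/
set_option linter.unnecessarySeqFocus false

open Matrix

lemma ut_inj_mid {R : Type*} [CommRing R] (a b c b' : R) (h : ut a b c = ut a b' c) :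
    b = b' := by
  have := congrArg (fun u : (Matrix (Fin 3) (Fin 3) R)ˣ => (u : Matrix (Fin 3) (Fin 3) R) 0 2) h
  simpa [ut] using this

lemma hat_rep {R : Type*} [CommRing R]
    (G : Subgroup (Matrix (Fin 3) (Fin 3) R)ˣ) (hG : G ≤ UT3 R)
    (x : (Matrix (Fin 3) (Fin 3) R)ˣ)
    (hx : x ∈ Subgroup.closure (↑G ∪
      {u : (Matrix (Fin 3) (Fin 3) R)ˣ | u ∈ UT3 R ∧
        (u : Matrix (Fin 3) (Fin 3) R) 0 1 = 0 ∧
        (u : Matrix (Fin 3) (Fin 3) R) 1 2 = 0})) :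
    ∃ a b c b' : R, x = ut a b c ∧ ut a b' c ∈ G := by
  have h10 : (1 : (Matrix (Fin 3) (Fin 3) R)ˣ) = ut 0 0 0 := by
    have := ut_mul (R := R) 0 0 0 0 0 0
    exact Eq.symm (by simpa using this)
  induction hx using Subgroup.closure_induction with
  | mem x hx =>
    rcases hx with hx | ⟨hx, h01, h12⟩
    · obtain ⟨a, b, c, rfl⟩ := (ut_eq_iff x).mp (hG hx)
      exact ⟨a, b, c, b, rfl, hx⟩
    · obtain ⟨a, b, c, rfl⟩ := (ut_eq_iff x).mp hx
      have ha : a = 0 := by simpa [ut] using h01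
      have hc : c = 0 := by simpa [ut] using h12
      subst ha hc
      exact ⟨0, b, 0, 0, rfl, h10 ▸ G.one_mem⟩
  | one => exact ⟨0, 0, 0, 0, h10, h10 ▸ G.one_mem⟩
  | mul x y _ _ ihx ihy =>
    obtain ⟨a, b, c, d, rfl, h⟩ := ihx
    obtain ⟨a', b', c', d', rfl, h'⟩ := ihy
    refine ⟨_, _, _, d + d' + a * c', ut_mul _ _ _ _ _ _, ?_⟩
    rw [← ut_mul]
    exact G.mul_mem h h'
  | inv x _ ih =>
    obtain ⟨a, b, c, d, rfl, h⟩ := ih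
    refine ⟨_, _, _, a * c - d, ut_inv _ _ _, ?_⟩
    rw [← ut_inv]
    exact G.inv_mem h

/-- Let `Ĝ` be generated by `G` together with all matrices in `UT₃(R)`
whose `(1,2)`- and `(2,3)`-entries vanish. Then `Ĝ` satisfies `τ` iff `G` does. -/
theorem satisfiesTau_extend_central (R : Type*) [CommRing R] [Nontrivial R]
    (G : Subgroup (Matrix (Fin 3) (Fin 3) R)ˣ) (hG : G ≤ UT3 R)
    (h1 : genA1 R ∈ G) (h2 : genA2 R ∈ G)
    (Ghat : Subgroup (Matrix (Fin 3) (Fin 3) R)ˣ)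
    (hGhat : Ghat = Subgroup.closure (↑G ∪
      {u : (Matrix (Fin 3) (Fin 3) R)ˣ | u ∈ UT3 R ∧
        (u : Matrix (Fin 3) (Fin 3) R) 0 1 = 0 ∧
        (u : Matrix (Fin 3) (Fin 3) R) 1 2 = 0})) :
    SatisfiesTau R Ghat ↔ SatisfiesTau R G := by
  subst hGhat
  constructor
  · intro h x₁ hx₁ x₂ hx₂
    exact h x₁ (Subgroup.subset_closure (Or.inl hx₁)) x₂ (Subgroup.subset_closure (Or.inl hx₂))
  · intro h x₁ hx₁ x₂ hx₂
    obtain ⟨a, b, c, d, rfl, hm⟩ := hat_rep G hG x₁ hx₁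
    obtain ⟨a', b', c', d', rfl, hm'⟩ := hat_rep G hG x₂ hx₂
    have := h _ hm _ hm'
    simpa only [genA1, genA2, ut_comm_iff] using this
end

section
/- Let L be a first-order language, T a set of L-sentences, and T_∀ the set of all universal L-sentences that are true in every model of T. Then a nonempty L-structure M is a model of T_∀ if and only if M embeds (as an L-substructure) into some model of T. -/
open FirstOrder Language

universe u v w

/-- The quantifier-free conditions on `M` with parameters from `M`. -/
def QFDiag (L : FirstOrder.Language.{u, v}) (M : Type w) [L.Structure M] : Type (max u v w) :=
  {χ : L.Formula M // FirstOrder.Language.BoundedFormula.IsQF χ ∧ χ.Realize (id : M → M)}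

/-- Finitely many quantifier-free conditions are implied by a single one. -/
theorem qfDiag_finset (L : FirstOrder.Language.{u, v}) (M : Type w) [L.Structure M]
    (s : Finset (QFDiag L M)) :
    ∃ χ : QFDiag L M, ∀ (N : Type (max u v w)) (_ : L.Structure N) (v : M → N),
      χ.1.Realize v → ∀ i ∈ s, i.1.Realize v := by
  classical
  induction s using Finset.induction_on with
  | empty =>
    exact ⟨⟨⊤, FirstOrder.Language.BoundedFormula.IsQF.top, by simp⟩, by simp⟩
  | insert a s _ ih =>
    obtain ⟨χ, hχ⟩ := ih
    refine ⟨⟨a.1 ⊓ χ.1, a.2.1.inf χ.2.1, ?_⟩, ?_⟩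
    · exact FirstOrder.Language.Formula.realize_inf.2 ⟨a.2.2, χ.2.2⟩
    · intro N iN v h i hi
      have h' := FirstOrder.Language.Formula.realize_inf.1 h
      rcases Finset.mem_insert.1 hi with rfl | hi
      · exact h'.1
      · exact hχ N iN v h'.2 i hi

/-- Any quantifier-free condition on `M` is realized in a model of `T`. -/
theorem qfDiag_realized (L : FirstOrder.Language.{u, v}) (T : L.Theory)
    (M : Type w) [L.Structure M] [hM : Nonempty M]
    (h : ∀ φ : L.Sentence,
        ((∃ (n : ℕ) (ψ : L.BoundedFormula Empty n), ψ.IsQF ∧ φ = ψ.alls) ∧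
          ∀ (N : Type (max u v w)) (iN : L.Structure N), Nonempty N → N ⊨ T →
            N ⊨ φ) →
        M ⊨ φ) (χ : QFDiag L M) :
    ∃ (N : Type (max u v w)) (_ : L.Structure N) (v : M → N), Nonempty N ∧ N ⊨ T ∧
      χ.1.Realize v := by
  classical
  obtain ⟨m⟩ := id hM
  obtain ⟨χ, hQF, hR⟩ := χ
  let S : Finset M := insert m (FirstOrder.Language.BoundedFormula.freeVarFinset χ)
  let e : S ≃ Fin S.card := S.equivFin
  let f : M → Fin S.card := fun x => if hx : x ∈ S then e ⟨x, hx⟩ else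
    e ⟨m, Finset.mem_insert_self _ _⟩
  let g : Fin S.card → M := fun i => (e.symm i).1
  have hgf : ∀ x ∈ S, g (f x) = x := by
    intro x hx
    simp [f, g, hx]
  let ψ : L.BoundedFormula Empty S.card :=
    FirstOrder.Language.BoundedFormula.relabel (k := 0) (fun x => Sum.inr (f x)) χ
  have hψ : ∀ (N : Type (max u v w)) (_ : L.Structure N) (xs : Fin S.card → N),
      ψ.Realize default xs ↔ χ.Realize (xs ∘ f) := by
    intro N iN xs
    rw [FirstOrder.Language.BoundedFormula.realize_relabel, FirstOrder.Language.Formula.Realize,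
      Subsingleton.elim (xs ∘ (Fin.natAdd S.card : Fin 0 → Fin S.card)) default]
    rfl
  have hψM : ∀ (xs : Fin S.card → M), ψ.Realize default xs ↔ χ.Realize (xs ∘ f) := by
    intro xs
    rw [FirstOrder.Language.BoundedFormula.realize_relabel, FirstOrder.Language.Formula.Realize,
      Subsingleton.elim (xs ∘ (Fin.natAdd S.card : Fin 0 → Fin S.card)) default]
    rfl
  by_contra hcon
  have key := h ψ.not.alls ⟨⟨_, ψ.not, (hQF.relabel _).not, rfl⟩, ?_⟩
  · have h1 := FirstOrder.Language.BoundedFormula.realize_alls.1 key g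
    rw [FirstOrder.Language.BoundedFormula.realize_not] at h1
    apply h1
    refine (hψM g).2 ?_
    refine (FirstOrder.Language.BoundedFormula.realize_restrictFreeVar
      (φ := χ) (f := id) (v := fun a => a.1) (g ∘ f) ?_).1
      ((FirstOrder.Language.BoundedFormula.realize_restrictFreeVar
      (φ := χ) (f := id) (v := fun a => a.1) id ?_).2 hR)
    · intro a
      exact (hgf a.1 (Finset.mem_insert_of_mem a.2)).symm
    · intro a
      rfl
  · intro N iN hN hT
    refine FirstOrder.Language.BoundedFormula.realize_alls.2 fun xs => ?_
    rw [FirstOrder.Language.BoundedFormula.realize_not]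
    intro hx
    exact hcon ⟨N, iN, xs ∘ f, hN, hT, (hψ N iN xs).1 hx⟩

/-- A map preserving all quantifier-free conditions gives an embedding. -/
theorem qfDiag_embedding (L : FirstOrder.Language.{u, v}) (M : Type w) [L.Structure M]
    (N : Type (max u v w)) [L.Structure N] (v : M → N)
    (h : ∀ χ : QFDiag L M, χ.1.Realize v) : Nonempty (M ↪[L] N) := by
  have hA : ∀ χ : L.Formula M, FirstOrder.Language.BoundedFormula.IsQF χ →
      χ.Realize (id : M → M) → χ.Realize v := fun χ h1 h2 => h ⟨χ, h1, h2⟩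
  have hiff : ∀ χ : L.Formula M, FirstOrder.Language.BoundedFormula.IsQF χ →
      (χ.Realize v ↔ χ.Realize (id : M → M)) := by
    intro χ hχ
    refine ⟨fun h1 => ?_, hA χ hχ⟩
    by_contra h2
    exact FirstOrder.Language.Formula.realize_not.1
      (hA χ.not hχ.not (FirstOrder.Language.Formula.realize_not.2 h2)) h1
  refine ⟨⟨⟨v, ?_⟩, ?_, ?_⟩⟩
  · intro a b hab
    have := hiff ((FirstOrder.Language.Term.var a).equal (FirstOrder.Language.Term.var b))
      (FirstOrder.Language.BoundedFormula.IsAtomic.equal _ _).isQF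
    simpa [FirstOrder.Language.Formula.realize_equal, hab] using this
  · intro n F xs
    have := hiff ((FirstOrder.Language.Term.func F fun i => FirstOrder.Language.Term.var (xs i)).equal
        (FirstOrder.Language.Term.var (FirstOrder.Language.Structure.funMap F xs)))
      (FirstOrder.Language.BoundedFormula.IsAtomic.equal _ _).isQF
    have h2 := this.2 (by simp [FirstOrder.Language.Formula.realize_equal])
    rw [FirstOrder.Language.Formula.realize_equal] at h2
    exact h2.symm
  · intro n R xs
    have := hiff (R.formula fun i => FirstOrder.Language.Term.var (xs i))
      (FirstOrder.Language.BoundedFormula.IsAtomic.rel _ _).isQF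
    rw [FirstOrder.Language.Formula.realize_rel, FirstOrder.Language.Formula.realize_rel] at this
    exact this

/-- A nonempty `L`-structure `M` models the universal theory `T_∀`
(all universal sentences true in every nonempty model of `T`) if and only if `M` embeds
into some nonempty model of `T`. -/
theorem models_universalTheory_iff_embeds (L : FirstOrder.Language.{u, v}) (T : L.Theory)
    (M : Type w) (iM : L.Structure M) (hM : Nonempty M) :
    (∀ φ : L.Sentence,
        ((∃ (n : ℕ) (ψ : L.BoundedFormula Empty n), ψ.IsQF ∧ φ = ψ.alls) ∧
          ∀ (N : Type (max u v w)) (iN : L.Structure N), Nonempty N → N ⊨ T →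
            N ⊨ φ) →
        M ⊨ φ) ↔
      ∃ (N : Type (max u v w)) (iN : L.Structure N), Nonempty N ∧ N ⊨ T ∧
        Nonempty (M ↪[L] N) := by
  constructor
  · intro h
    let D : QFDiag L M → L[[M]].Theory := fun χ =>
      (L.lhomWithConstants M).onTheory T ∪ {FirstOrder.Language.Formula.equivSentence χ.1}
    have hsat : FirstOrder.Language.Theory.IsSatisfiable (⋃ χ, D χ) := by
      rw [FirstOrder.Language.Theory.isSatisfiable_iUnion_iff_isSatisfiable_iUnion_finset]
      intro s
      obtain ⟨χ, hχ⟩ := qfDiag_finset L M s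
      obtain ⟨N, iN, v, hN, hT, hv⟩ := qfDiag_realized L T M h χ
      let : (FirstOrder.Language.constantsOn M).Structure N :=
        FirstOrder.Language.constantsOn.structure v
      have hT' : N ⊨ (L.lhomWithConstants M).onTheory T :=
        (FirstOrder.Language.LHom.onTheory_model _ _).2 hT
      have : N ⊨ ⋃ χ ∈ s, D χ := by
        refine ⟨fun φ hφ => ?_⟩
        simp only [Set.mem_iUnion] at hφ
        obtain ⟨i, hi, hφ⟩ := hφ
        rcases hφ with hφ | hφ
        · exact hT'.realize_of_mem φ hφ
        · rw [Set.mem_singleton_iff.1 hφ]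
          exact (FirstOrder.Language.Formula.realize_equivSentence _ _).2 (hχ N iN v hv i hi)
      exact FirstOrder.Language.Theory.Model.isSatisfiable N
    obtain ⟨N⟩ := hsat
    let iN : L.Structure N := (L.lhomWithConstants M).reduct N
    have hmem : ∀ χ, ∀ φ ∈ D χ, N ⊨ φ := fun χ φ hφ =>
      N.is_model.realize_of_mem φ (Set.mem_iUnion.2 ⟨χ, hφ⟩)
    refine ⟨N, iN, inferInstance, ?_, ?_⟩
    · refine (FirstOrder.Language.LHom.onTheory_model (L.lhomWithConstants M) T).1 ⟨fun φ hφ => ?_⟩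
      exact hmem ⟨⊤, FirstOrder.Language.BoundedFormula.IsQF.top, by simp⟩ φ (Or.inl hφ)
    · refine qfDiag_embedding L M N (fun a => (L.con a : N)) fun χ => ?_
      exact (FirstOrder.Language.Formula.realize_equivSentence _ _).1 (hmem χ _ (Or.inr rfl))
  · rintro ⟨N, iN, hN, hT, ⟨f⟩⟩ φ ⟨⟨n, ψ, hψ, rfl⟩, hφ⟩
    refine FirstOrder.Language.BoundedFormula.realize_alls.2 fun xs => ?_
    have h1 := FirstOrder.Language.BoundedFormula.realize_alls.1 (hφ N iN hN hT) (f ∘ xs)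
    rw [← hψ.realize_embedding f]
    convert h1
end

section
/- Let G be a group such that the centralizer in G of every noncentral element of G is abelian (G satisfies NZCT). If G₀ is a nonabelian subgroup of G, then the center of G₀ is contained in the center of G: Z(G₀) ⊆ Z(G). -/
/-- If `G` satisfies NZCT (centralizers of noncentral elements are
abelian) and `G₀` is a nonabelian subgroup of `G`, then `Z(G₀) ⊆ Z(G)`. -/
theorem center_subgroup_le_center {G : Type*} [Group G]
    (hNZCT : ∀ g : G, g ∉ Subgroup.center G →
      ∀ x ∈ Subgroup.centralizer ({g} : Set G), ∀ y ∈ Subgroup.centralizer ({g} : Set G),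
        x * y = y * x)
    (G₀ : Subgroup G) (hna : ∃ x ∈ G₀, ∃ y ∈ G₀, x * y ≠ y * x) :
    ∀ z ∈ G₀, (∀ w ∈ G₀, z * w = w * z) → z ∈ Subgroup.center G := by
  intro z _ hz
  by_contra hc
  obtain ⟨x, hx, y, hy, hxy⟩ := hna
  have key : ∀ w ∈ G₀, w ∈ Subgroup.centralizer ({z} : Set G) := by
    intro w hw
    rw [Subgroup.mem_centralizer_iff]
    intro h hh
    rw [Set.mem_singleton_iff] at hh
    subst hh
    exact hz w hw
  exact hxy (hNZCT z hc x (key x hx) y (key y hy))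
end
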